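/- arXiv:2307.10027 — 2 statements merged into one kernel-verified Lean document; each statement's English description precedes it below -/
import Mathlib

section
/- (Symmetrization.) For every f ∈ 𝓑, there exists f^s ∈ 𝓑₊ such that Γ_{0,1}(f^s) = Γ_{0,1}(f) and A_{0,1}(f^s) ≥ A_{0,1}(f). -/
/-!
The parabola `c·t(x-t)` with `c ≥ 0` is a nonnegative concave bridge on `[0,x]` with
`Γ = c²x³/3` and `A = cx³/6`. So it suffices to prove the isoperimetric inequality
`A(f) ≤ √(x³Γ(f)/12)`, in which these parabolas attain equality, and to choose `c` so that the
parabola has the energy of `f`.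

Let `h = f′ ∈ L²([0,x])`, and let `C` be the closed convex cone of the `v ∈ L²` whose primitive is
nonnegative and vanishes at `x`. The element `p` of least norm in `h + C` is orthogonal to `p - h`
and has nonnegative inner product with every element of `C`. Tested against tent functions, the
latter says that the primitive of `p` is concave; as it dominates `f`, it dominates the least
concave majorant of `f`. The same construction for `-h` gives `q`, whose negated primitive lies
below the greatest convex minorant. The orthogonality relations for `p` and `q` amount to
`‖p + q‖² + ‖h - p + q‖² = ‖h‖²`, so that `‖p + q‖ ≤ ‖h‖`. Finally `A(f)` is at most the integral of
the primitive of `p + q`, which equals `⟪x/2 - t, p + q⟫` by parts because `p + q` has mean zero,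
and `‖x/2 - t‖² = x³/12`.
-/

open MeasureTheory Filter Set
open scoped ENNReal

noncomputable section

namespace DidoLIL

/-- `f ∈ 𝓐^x`: `f : [0,x] → ℝ` is absolutely continuous with `f 0 = 0` and
`∫₀ˣ f′(u)² du < ∞`.  Absolute continuity is encoded by the fundamental theorem of
calculus: `f` is the integral of its (a.e.) derivative, which is integrable, and the
square of the derivative is integrable (`Γ_{0,x}(f) < ∞`). -/
def MemA (x : ℝ) (f : ℝ → ℝ) : Prop :=
  f 0 = 0 ∧
  MeasureTheory.IntegrableOn (deriv f) (Set.Icc 0 x) ∧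
  (∀ t ∈ Set.Icc (0:ℝ) x, f t = ∫ s in (0:ℝ)..t, deriv f s) ∧
  MeasureTheory.IntegrableOn (fun u => (deriv f u) ^ 2) (Set.Icc 0 x)

/-- The least concave majorant of `f` on `[0,x]`: the pointwise infimum of all functions
concave on `[0,x]` that dominate `f` there. -/
def concMaj (x : ℝ) (f : ℝ → ℝ) (u : ℝ) : ℝ :=
  sInf {y : ℝ | ∃ g : ℝ → ℝ, ConcaveOn ℝ (Set.Icc 0 x) g ∧
    (∀ t ∈ Set.Icc (0:ℝ) x, f t ≤ g t) ∧ y = g u}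

/-- The greatest convex minorant of `f` on `[0,x]`: the pointwise supremum of all functions
convex on `[0,x]` that are dominated by `f` there. -/
def convMin (x : ℝ) (f : ℝ → ℝ) (u : ℝ) : ℝ :=
  sSup {y : ℝ | ∃ g : ℝ → ℝ, ConvexOn ℝ (Set.Icc 0 x) g ∧
    (∀ t ∈ Set.Icc (0:ℝ) x, g t ≤ f t) ∧ y = g u}

/-- `A_{0,x}(f) = ∫₀ˣ (f̄(u) − f̲(u)) du`. -/
def AreaF (x : ℝ) (f : ℝ → ℝ) : ℝ :=
  ∫ u in Set.Icc (0:ℝ) x, (concMaj x f u - convMin x f u)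

/-- `Γ_{0,x}(f) = ∫₀ˣ f′(u)² du`. -/
def GammaF (x : ℝ) (f : ℝ → ℝ) : ℝ :=
  ∫ u in Set.Icc (0:ℝ) x, (deriv f u) ^ 2

end DidoLIL

namespace DidoLIL

open scoped RealInnerProductSpace

/-! ### Polar cones in a Hilbert space -/

section HilbertSpace

variable {E : Type*} [NormedAddCommGroup E] [InnerProductSpace ℝ E]

/-- Moreau's decomposition of `-h` along `C` and its polar cone, with `p` the point of least norm
of `h + C`. -/
theorem exists_mem_innerDual_sub_mem [CompleteSpace E] (C : ProperCone ℝ E) (h : E) :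
    ∃ p ∈ ProperCone.innerDual (C : Set E), p - h ∈ C ∧ ⟪p, p - h⟫ = 0 := by
  have hconv : Convex ℝ (C : Set E) := C.toPointedCone.convex
  obtain ⟨v, hv, hmin⟩ := exists_norm_eq_iInf_of_complete_convex
    ⟨0, C.zero_mem⟩ C.isClosed.isComplete hconv (-h)
  have hvar : ∀ w ∈ C, 0 ≤ ⟪v + h, w - v⟫ := fun w hw => by
    have := (norm_eq_iInf_iff_real_inner_le_zero hconv hv).1 hmin w hw
    rwa [← neg_add', add_comm, inner_neg_left, neg_nonpos] at this
  have horth : ⟪v + h, v⟫ = 0 := by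
    refine le_antisymm ?_ ?_
    · simpa using hvar 0 C.zero_mem
    · simpa using hvar (v + v) (C.add_mem hv hv)
  refine ⟨v + h, fun w hw => ?_, by simpa using hv, by simpa using horth⟩
  simpa [inner_sub_right, horth, real_inner_comm] using hvar w hw

theorem norm_add_le_of_inner_eq_zero {h p q : E} (hp : ⟪p, p - h⟫ = 0)
    (hq : ⟪q, q + h⟫ = 0) : ‖p + q‖ ≤ ‖h‖ := by
  have pythagoras : ‖p + q‖ ^ 2 + ‖h - p + q‖ ^ 2 = ‖h‖ ^ 2 := by
    simp only [← real_inner_self_eq_norm_sq, inner_add_left, inner_add_right, inner_sub_left,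
      inner_sub_right] at hp hq ⊢
    linarith [real_inner_comm p h, real_inner_comm q h, real_inner_comm q p]
  exact le_of_sq_le_sq (by linarith [sq_nonneg ‖h - p + q‖]) (norm_nonneg h)

end HilbertSpace

/-! ### Primitives of square-integrable functions -/

theorem integral_primitive_of_integral_eq_zero {a b : ℝ} {r : ℝ → ℝ}
    (hr : IntervalIntegrable r volume a b) (hr0 : ∫ s in a..b, r s = 0) :
    ∫ t in a..b, ∫ s in a..t, r s = ∫ t in a..b, ((a + b) / 2 - t) * r t := by
  set R : ℝ → ℝ := fun t => ∫ s in a..t, r s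
  have hR : AbsolutelyContinuousOnInterval R a b :=
    hr.absolutelyContinuousOnInterval_intervalIntegral left_mem_uIcc
  have hg : AbsolutelyContinuousOnInterval (fun t => t - (a + b) / 2) a b :=
    ContDiffOn.absolutelyContinuousOnInterval (by fun_prop)
  have hparts := hR.integral_mul_deriv_eq_deriv_mul hg
  simp only [deriv_sub_const_fun, deriv_id'', mul_one] at hparts
  rw [hparts]
  have hderiv : ∫ t in a..b, deriv R t * (t - (a + b) / 2) =
      ∫ t in a..b, r t * (t - (a + b) / 2) := by
    refine intervalIntegral.integral_congr_ae ?_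
    filter_upwards [hr.ae_hasDerivAt_integral] with t ht hmem
    rw [(ht (uIoc_subset_uIcc hmem) a left_mem_uIcc).deriv]
  simp only [R, hr0, hderiv, intervalIntegral.integral_same, zero_mul, sub_zero, zero_sub,
    ← intervalIntegral.integral_neg]
  congr with t
  ring

section L2

theorem inner_toLp_left {α : Type*} [MeasurableSpace α] {μ : Measure α} {g : α → ℝ}
    (hg : MemLp g 2 μ) (r : Lp ℝ 2 μ) : ⟪hg.toLp g, r⟫ = ∫ u, g u * r u ∂μ := by
  rw [L2.inner_def]
  refine integral_congr_ae (hg.coeFn_toLp.mono fun u hu => ?_)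
  simp [hu, mul_comm]

theorem norm_toLp_sq {α : Type*} [MeasurableSpace α] {μ : Measure α} {g : α → ℝ}
    (hg : MemLp g 2 μ) : ‖hg.toLp g‖ ^ 2 = ∫ u, g u ^ 2 ∂μ := by
  rw [← real_inner_self_eq_norm_sq, inner_toLp_left]
  refine integral_congr_ae (hg.coeFn_toLp.mono fun u hu => ?_)
  simp [hu, pow_two]

/-- The Hilbert space `L²([0,x])`, which contains the derivatives of the functions in `MemA x`. -/
abbrev IccL2 (x : ℝ) : Type := Lp ℝ 2 (volume.restrict (Icc 0 x))

/-- The class of `1_{(0,t]}` in `L²([0,x])`. For `0 ≤ t ≤ x` it represents the functional taking `r`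
to the value at `t` of the primitive of `r` vanishing at `0`; primitives are written
`t ↦ ⟪stepLp x t, r⟫` throughout. -/
def stepLp (x t : ℝ) : IccL2 x :=
  indicatorConstLp 2 (measurableSet_Ioc : MeasurableSet (Ioc 0 t)) (measure_ne_top _ _) 1

variable {x : ℝ}

theorem setIntegral_Icc_eq (hx : 0 ≤ x) (g : ℝ → ℝ) :
    ∫ u in Icc 0 x, g u = ∫ u in 0..x, g u := by
  rw [intervalIntegral.integral_of_le hx, integral_Icc_eq_integral_Ioc]

theorem inner_stepLp {t : ℝ} (ht : t ∈ Icc 0 x) (r : IccL2 x) :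
    ⟪stepLp x t, r⟫ = ∫ s in 0..t, r s := by
  have hsub : Ioc 0 t ⊆ Icc 0 x := Ioc_subset_Icc_self.trans (Icc_subset_Icc_right ht.2)
  rw [stepLp, L2.inner_indicatorConstLp_one, Measure.restrict_restrict_of_subset hsub,
    intervalIntegral.integral_of_le ht.1]

theorem inner_stepLp_toLp {g : ℝ → ℝ} (hg : MemLp g 2 (volume.restrict (Icc 0 x))) {t : ℝ}
    (ht : t ∈ Icc 0 x) : ⟪stepLp x t, hg.toLp g⟫ = ∫ s in 0..t, g s := by
  have hsub : Ioc 0 t ⊆ Icc 0 x := Ioc_subset_Icc_self.trans (Icc_subset_Icc_right ht.2)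
  rw [inner_stepLp ht, intervalIntegral.integral_of_le ht.1, intervalIntegral.integral_of_le ht.1]
  exact integral_congr_ae (ae_restrict_of_ae_restrict_of_subset hsub hg.coeFn_toLp)

theorem inner_stepLp_stepLp {s t : ℝ} (hs : s ∈ Icc 0 x) (ht : t ∈ Icc 0 x) :
    ⟪stepLp x s, stepLp x t⟫ = min s t := by
  have hsub : Ioc 0 (min s t) ⊆ Icc 0 x :=
    Ioc_subset_Icc_self.trans (Icc_subset_Icc_right ((min_le_left s t).trans hs.2))
  rw [stepLp, stepLp, L2.real_inner_indicatorConstLp_one_indicatorConstLp_one, Ioc_inter_Ioc,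
    max_self, measureReal_restrict_apply measurableSet_Ioc, inter_eq_left.2 hsub,
    Real.volume_real_Ioc_of_le (le_min hs.1 ht.1), sub_zero]

theorem intervalIntegrable_coeFn (hx : 0 ≤ x) (r : IccL2 x) :
    IntervalIntegrable r volume 0 x :=
  (intervalIntegrable_iff_integrableOn_Icc_of_le hx).2 ((Lp.memLp r).integrable one_le_two)

theorem integrableOn_inner_stepLp (hx : 0 ≤ x) (r : IccL2 x) :
    IntegrableOn (fun t => ⟪stepLp x t, r⟫) (Icc 0 x) := by
  have hcont := intervalIntegral.continuousOn_primitive_interval'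
    (intervalIntegrable_coeFn hx r) left_mem_uIcc
  rw [uIcc_of_le hx] at hcont
  exact (hcont.congr fun t ht => inner_stepLp ht r).integrableOn_Icc

theorem memLp_center_sub (x : ℝ) :
    MemLp (fun t : ℝ => x / 2 - t) 2 (volume.restrict (Icc 0 x)) := by
  have hcont : Continuous fun t : ℝ => x / 2 - t := by fun_prop
  rw [memLp_two_iff_integrable_sq hcont.aestronglyMeasurable]
  exact (hcont.pow 2).continuousOn.integrableOn_Icc

theorem norm_toLp_center_sub_sq (hx : 0 ≤ x) : ‖(memLp_center_sub x).toLp‖ ^ 2 = x ^ 3 / 12 := by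
  rw [norm_toLp_sq, setIntegral_Icc_eq hx,
    intervalIntegral.integral_comp_sub_left (fun t : ℝ => t ^ 2), integral_pow]
  ring

theorem integral_inner_stepLp_le (hx : 0 ≤ x) {r : IccL2 x} (hr : ⟪stepLp x x, r⟫ = 0) :
    ∫ t in Icc 0 x, ⟪stepLp x t, r⟫ ≤ √(x ^ 3 / 12) * ‖r‖ := by
  rw [inner_stepLp (right_mem_Icc.2 hx)] at hr
  calc ∫ t in Icc 0 x, ⟪stepLp x t, r⟫
      = ∫ t in Icc 0 x, ∫ s in 0..t, r s :=
        setIntegral_congr_fun measurableSet_Icc fun t ht => inner_stepLp ht r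
    _ = ∫ t in Icc 0 x, (x / 2 - t) * r t := by
        rw [setIntegral_Icc_eq hx, setIntegral_Icc_eq hx,
          integral_primitive_of_integral_eq_zero (intervalIntegrable_coeFn hx r) hr, zero_add]
    _ = ⟪(memLp_center_sub x).toLp, r⟫ := (inner_toLp_left _ r).symm
    _ ≤ ‖(memLp_center_sub x).toLp‖ * ‖r‖ := real_inner_le_norm _ _
    _ = √(x ^ 3 / 12) * ‖r‖ := by
        rw [← norm_toLp_center_sub_sq hx, Real.sqrt_sq (norm_nonneg _)]

end L2

/-! ### The cone of nonnegative bridges -/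

section BridgeCone

variable {x : ℝ}

/-- The closed convex cone in `L²([0,x])` of the derivatives of nonnegative bridges, written as a
dual cone: the generator `-stepLp x x` turns the inequality at the endpoint into an equality. -/
def bridgeCone (x : ℝ) : ProperCone ℝ (IccL2 x) :=
  .innerDual (insert (-stepLp x x) (stepLp x '' Icc 0 x))

theorem mem_bridgeCone (hx : 0 ≤ x) {v : IccL2 x} :
    v ∈ bridgeCone x ↔ ⟪stepLp x x, v⟫ = 0 ∧ ∀ t ∈ Icc 0 x, 0 ≤ ⟪stepLp x t, v⟫ := by
  simp only [bridgeCone, ProperCone.mem_innerDual, forall_mem_insert, forall_mem_image,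
    inner_neg_left, Left.nonneg_neg_iff]
  exact ⟨fun h => ⟨h.1.antisymm (h.2 (right_mem_Icc.2 hx)), h.2⟩, fun h => ⟨h.1.le, h.2⟩⟩

/-- The derivative of the tent function supported on `[a,c]` with apex at `b` and slopes
`1 / (b - a)` and `-1 / (c - b)`, as an element of `L²([0,x])`. -/
def tentDeriv (x a b c : ℝ) : IccL2 x :=
  (b - a)⁻¹ • (stepLp x b - stepLp x a) - (c - b)⁻¹ • (stepLp x c - stepLp x b)

theorem inner_tentDeriv (a b c : ℝ) (v : IccL2 x) :
    ⟪tentDeriv x a b c, v⟫ = (⟪stepLp x b, v⟫ - ⟪stepLp x a, v⟫) / (b - a) -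
      (⟪stepLp x c, v⟫ - ⟪stepLp x b, v⟫) / (c - b) := by
  simp only [tentDeriv, inner_sub_left, real_inner_smul_left, div_eq_inv_mul]

theorem tentDeriv_mem_bridgeCone {a b c : ℝ} (ha : a ∈ Icc 0 x) (hc : c ∈ Icc 0 x)
    (hab : a < b) (hbc : b < c) : tentDeriv x a b c ∈ bridgeCone x := by
  have hb : b ∈ Icc 0 x := ⟨ha.1.trans hab.le, hbc.le.trans hc.2⟩
  have hx : 0 ≤ x := ha.1.trans ha.2
  have htent : ∀ t ∈ Icc 0 x, ⟪stepLp x t, tentDeriv x a b c⟫ =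
      (min t b - min t a) / (b - a) - (min t c - min t b) / (c - b) := fun t ht => by
    rw [real_inner_comm, inner_tentDeriv, inner_stepLp_stepLp ha ht, inner_stepLp_stepLp hb ht,
      inner_stepLp_stepLp hc ht, min_comm a, min_comm b, min_comm c]
  refine (mem_bridgeCone hx).2 ⟨?_, fun t ht => ?_⟩
  · rw [htent x (right_mem_Icc.2 hx), min_eq_right ha.2, min_eq_right hb.2, min_eq_right hc.2,
      div_self (sub_pos.2 hab).ne', div_self (sub_pos.2 hbc).ne', sub_self]
  · have hmin : ConcaveOn ℝ univ fun s : ℝ => min t s :=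
      (concaveOn_const t convex_univ).inf (concaveOn_id convex_univ)
    rw [htent t ht, sub_nonneg]
    exact hmin.slope_anti_adjacent (mem_univ a) (mem_univ c) hab hbc

theorem concaveOn_inner_stepLp {p : IccL2 x}
    (hp : p ∈ ProperCone.innerDual (bridgeCone x : Set (IccL2 x))) :
    ConcaveOn ℝ (Icc 0 x) fun t => ⟪stepLp x t, p⟫ := by
  refine concaveOn_of_slope_anti_adjacent (convex_Icc 0 x) fun ha hc hab hbc => ?_
  rw [← sub_nonneg, ← inner_tentDeriv]
  exact hp (tentDeriv_mem_bridgeCone ha hc hab hbc)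

/-- The obstacle problem: `p` has least norm among the elements of `L²([0,x])` whose primitive
dominates that of `h` and agrees with it at `x`. -/
theorem exists_concaveOn_inner_stepLp_ge (hx : 0 ≤ x) (h : IccL2 x) :
    ∃ p : IccL2 x, ConcaveOn ℝ (Icc 0 x) (fun t => ⟪stepLp x t, p⟫) ∧
      (∀ t ∈ Icc 0 x, ⟪stepLp x t, h⟫ ≤ ⟪stepLp x t, p⟫) ∧
      ⟪stepLp x x, p⟫ = ⟪stepLp x x, h⟫ ∧ ⟪p, p - h⟫ = 0 := by
  obtain ⟨p, hp, hph, horth⟩ := exists_mem_innerDual_sub_mem (bridgeCone x) h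
  simp only [mem_bridgeCone hx, inner_sub_right, sub_eq_zero, sub_nonneg] at hph
  exact ⟨p, concaveOn_inner_stepLp hp, hph.2, hph.1, horth⟩

end BridgeCone

/-! ### Concave majorants and area -/

section ConcaveMajorant

variable {x u : ℝ} {f g : ℝ → ℝ}

theorem convMin_eq_neg_concMaj_neg (x : ℝ) (f : ℝ → ℝ) (u : ℝ) :
    convMin x f u = -concMaj x (-f) u := by
  rw [convMin, concMaj, ← Real.sSup_neg]
  congr 1
  ext y
  constructor
  · rintro ⟨g, hg, hgf, rfl⟩
    exact ⟨-g, hg.neg, fun t ht => neg_le_neg (hgf t ht), rfl⟩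
  · rintro ⟨g, hg, hfg, hy⟩
    exact ⟨-g, hg.neg, fun t ht => neg_le.1 (hfg t ht), neg_eq_iff_eq_neg.1 hy⟩

theorem areaF_eq (x : ℝ) (f : ℝ → ℝ) :
    AreaF x f = ∫ u in Icc 0 x, (concMaj x f u + concMaj x (-f) u) := by
  simp only [AreaF, convMin_eq_neg_concMaj_neg, sub_neg_eq_add]

theorem concMaj_le (hg : ConcaveOn ℝ (Icc 0 x) g) (hfg : ∀ t ∈ Icc 0 x, f t ≤ g t)
    (hu : u ∈ Icc 0 x) : concMaj x f u ≤ g u := by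
  refine csInf_le ⟨f u, ?_⟩ ⟨g, hg, hfg, rfl⟩
  rintro _ ⟨k, -, hk, rfl⟩
  exact hk u hu

/-- The majorant `g` rules out the junk value `sInf ∅ = 0`. -/
theorem le_concMaj (hg : ConcaveOn ℝ (Icc 0 x) g) (hfg : ∀ t ∈ Icc 0 x, f t ≤ g t) {y : ℝ}
    (hy : ∀ k : ℝ → ℝ, ConcaveOn ℝ (Icc 0 x) k → (∀ t ∈ Icc 0 x, f t ≤ k t) → y ≤ k u) :
    y ≤ concMaj x f u := by
  refine le_csInf ⟨g u, g, hg, hfg, rfl⟩ ?_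
  rintro _ ⟨k, hk, hfk, rfl⟩
  exact hy k hk hfk

theorem self_le_concMaj (hg : ConcaveOn ℝ (Icc 0 x) g) (hfg : ∀ t ∈ Icc 0 x, f t ≤ g t)
    (hu : u ∈ Icc 0 x) : f u ≤ concMaj x f u :=
  le_concMaj hg hfg fun _ _ hfk => hfk u hu

theorem concMaj_eq_self (hf : ConcaveOn ℝ (Icc 0 x) f) (hu : u ∈ Icc 0 x) :
    concMaj x f u = f u :=
  (concMaj_le hf (fun _ _ => le_rfl) hu).antisymm (self_le_concMaj hf (fun _ _ => le_rfl) hu)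

theorem concMaj_eq_zero (hf : ∀ t ∈ Icc 0 x, f t ≤ 0) (hf0 : f 0 = 0) (hfx : f x = 0)
    (hu : u ∈ Icc 0 x) : concMaj x f u = 0 := by
  have hzero : ConcaveOn ℝ (Icc 0 x) (0 : ℝ → ℝ) := concaveOn_const 0 (convex_Icc 0 x)
  have hx : 0 ≤ x := hu.1.trans hu.2
  refine (concMaj_le hzero hf hu).antisymm (le_concMaj hzero hf fun k hk hfk => ?_)
  have hmin : min (k 0) (k x) ≤ k u := hk.ge_on_segment (left_mem_Icc.2 hx) (right_mem_Icc.2 hx)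
    (by rwa [segment_eq_Icc hx])
  refine le_trans (le_min ?_ ?_) hmin
  · simpa [hf0] using hfk 0 (left_mem_Icc.2 hx)
  · simpa [hfx] using hfk x (right_mem_Icc.2 hx)

theorem areaF_le_integral_add (hg : ConcaveOn ℝ (Icc 0 x) g) (hfg : ∀ t ∈ Icc 0 x, f t ≤ g t)
    (hgi : IntegrableOn g (Icc 0 x)) {k : ℝ → ℝ} (hk : ConcaveOn ℝ (Icc 0 x) k)
    (hfk : ∀ t ∈ Icc 0 x, -f t ≤ k t) (hki : IntegrableOn k (Icc 0 x)) :
    AreaF x f ≤ ∫ u in Icc 0 x, (g u + k u) := by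
  rw [areaF_eq]
  -- Nonnegativity of the smaller integrand makes its measurability unnecessary.
  refine integral_mono_of_nonneg ?_ (hgi.add hki) ?_ <;>
    filter_upwards [ae_restrict_mem measurableSet_Icc] with u hu
  · have hneg : -f u ≤ concMaj x (-f) u := self_le_concMaj hk hfk hu
    simp only [Pi.zero_apply]
    linarith [self_le_concMaj hg hfg hu]
  · exact add_le_add (concMaj_le hg hfg hu) (concMaj_le hk hfk hu)

theorem areaF_eq_integral_of_concaveOn (hf : ConcaveOn ℝ (Icc 0 x) f)
    (hnonneg : ∀ t ∈ Icc 0 x, 0 ≤ f t) (hf0 : f 0 = 0) (hfx : f x = 0) :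
    AreaF x f = ∫ u in Icc 0 x, f u := by
  rw [areaF_eq]
  refine setIntegral_congr_fun measurableSet_Icc fun u hu => ?_
  have hneg : concMaj x (-f) u = 0 :=
    concMaj_eq_zero (fun t ht => neg_nonpos.2 (hnonneg t ht)) (by simp [hf0]) (by simp [hfx]) hu
  simp only [concMaj_eq_self hf hu, hneg, add_zero]

end ConcaveMajorant

/-! ### The isoperimetric inequality -/

section Isoperimetric

variable {x : ℝ} {f : ℝ → ℝ}

theorem MemA.memLp_deriv (hf : MemA x f) : MemLp (deriv f) 2 (volume.restrict (Icc 0 x)) :=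
  (memLp_two_iff_integrable_sq hf.2.1.aestronglyMeasurable).2 hf.2.2.2

theorem areaF_le_sqrt_mul_gammaF (hx : 0 ≤ x) (hf : MemA x f) :
    AreaF x f ≤ √(x ^ 3 / 12 * GammaF x f) := by
  set h : IccL2 x := hf.memLp_deriv.toLp
  have hprim : ∀ t ∈ Icc 0 x, ⟪stepLp x t, h⟫ = f t := fun t ht =>
    (inner_stepLp_toLp hf.memLp_deriv ht).trans (hf.2.2.1 t ht).symm
  obtain ⟨p, hp_conc, hp_ge, hp_right, hp_orth⟩ := exists_concaveOn_inner_stepLp_ge hx h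
  obtain ⟨q, hq_conc, hq_ge, hq_right, hq_orth⟩ := exists_concaveOn_inner_stepLp_ge hx (-h)
  have hpq_right : ⟪stepLp x x, p + q⟫ = 0 := by
    rw [inner_add_right, hp_right, hq_right, inner_neg_right, add_neg_cancel]
  calc AreaF x f
      ≤ ∫ t in Icc 0 x, (⟪stepLp x t, p⟫ + ⟪stepLp x t, q⟫) :=
        areaF_le_integral_add hp_conc (fun t ht => hprim t ht ▸ hp_ge t ht)
          (integrableOn_inner_stepLp hx p) hq_conc
          (fun t ht => by simpa only [inner_neg_right, hprim t ht] using hq_ge t ht)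
          (integrableOn_inner_stepLp hx q)
    _ = ∫ t in Icc 0 x, ⟪stepLp x t, p + q⟫ := by simp only [inner_add_right]
    _ ≤ √(x ^ 3 / 12) * ‖p + q‖ := integral_inner_stepLp_le hx hpq_right
    _ ≤ √(x ^ 3 / 12) * ‖h‖ := by
        gcongr
        exact norm_add_le_of_inner_eq_zero hp_orth (sub_neg_eq_add q h ▸ hq_orth)
    _ = √(x ^ 3 / 12 * GammaF x f) := by
        rw [GammaF, ← norm_toLp_sq hf.memLp_deriv, Real.sqrt_mul (by positivity),
          Real.sqrt_sq (norm_nonneg _)]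

end Isoperimetric

/-! ### The extremal parabola -/

section Parabola

/-- The parabola `t ↦ c·t(x-t)`, for which the isoperimetric inequality is an equality. -/
def parabola (x c t : ℝ) : ℝ := c * (t * (x - t))

theorem parabola_zero (x c : ℝ) : parabola x c 0 = 0 := by simp [parabola]

theorem parabola_right (x c : ℝ) : parabola x c x = 0 := by simp [parabola]

theorem hasDerivAt_parabola (x c t : ℝ) : HasDerivAt (parabola x c) (c * (x - 2 * t)) t := by
  have h := ((hasDerivAt_id t).mul ((hasDerivAt_id t).const_sub x)).const_mul c
  exact h.congr_deriv (by simp only [id]; ring)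

theorem deriv_parabola (x c : ℝ) : deriv (parabola x c) = fun t => c * (x - 2 * t) :=
  funext fun t => (hasDerivAt_parabola x c t).deriv

theorem memA_parabola (x c : ℝ) : MemA x (parabola x c) := by
  have hcont : Continuous fun t : ℝ => c * (x - 2 * t) := by fun_prop
  simp only [MemA, deriv_parabola]
  refine ⟨parabola_zero x c, hcont.continuousOn.integrableOn_Icc, fun t _ => ?_,
    (hcont.pow 2).continuousOn.integrableOn_Icc⟩
  rw [intervalIntegral.integral_eq_sub_of_hasDerivAt (fun s _ => hasDerivAt_parabola x c s)
    (hcont.intervalIntegrable 0 t), parabola_zero, sub_zero]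

variable {x c : ℝ}

theorem parabola_nonneg (hc : 0 ≤ c) {t : ℝ} (ht : t ∈ Icc 0 x) : 0 ≤ parabola x c t :=
  mul_nonneg hc (mul_nonneg ht.1 (sub_nonneg.2 ht.2))

theorem concaveOn_parabola (hc : 0 ≤ c) : ConcaveOn ℝ univ (parabola x c) := by
  have hderiv2 : ∀ t, deriv^[2] (parabola x c) t = -(2 * c) := fun t => by
    simp [deriv_parabola, mul_comm]
  refine concaveOn_univ_of_deriv2_nonpos (fun t => (hasDerivAt_parabola x c t).differentiableAt)
    ?_ fun t => ?_
  · rw [deriv_parabola]; fun_prop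
  · rw [hderiv2]; linarith

theorem gammaF_parabola (hx : 0 ≤ x) : GammaF x (parabola x c) = c ^ 2 * (x ^ 3 / 3) := by
  simp only [GammaF, deriv_parabola, mul_pow]
  rw [setIntegral_Icc_eq hx, intervalIntegral.integral_const_mul,
    intervalIntegral.integral_comp_sub_mul (fun t => t ^ 2) two_ne_zero, integral_pow,
    smul_eq_mul]
  ring

theorem integral_parabola (x c : ℝ) : ∫ t in 0..x, parabola x c t = c * (x ^ 3 / 6) := by
  simp only [parabola, mul_sub, ← pow_two]
  rw [intervalIntegral.integral_sub (Continuous.intervalIntegrable (by fun_prop) _ _)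
    (Continuous.intervalIntegrable (by fun_prop) _ _)]
  simp only [intervalIntegral.integral_const_mul, intervalIntegral.integral_mul_const,
    integral_id, integral_pow]
  ring

theorem areaF_parabola (hx : 0 ≤ x) (hc : 0 ≤ c) :
    AreaF x (parabola x c) = c * (x ^ 3 / 6) := by
  rw [areaF_eq_integral_of_concaveOn
    ((concaveOn_parabola hc).subset (subset_univ _) (convex_Icc 0 x))
    (fun _ => parabola_nonneg hc) (parabola_zero x c) (parabola_right x c),
    setIntegral_Icc_eq hx, integral_parabola]

end Parabola

theorem symmetrization_general {x : ℝ} (hx : 0 < x) {f : ℝ → ℝ} (hf : MemA x f) :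
    ∃ fs : ℝ → ℝ, MemA x fs ∧ fs x = 0 ∧ (∀ u ∈ Icc 0 x, 0 ≤ fs u) ∧
      GammaF x fs = GammaF x f ∧ AreaF x f ≤ AreaF x fs := by
  have hΓ : 0 ≤ GammaF x f := integral_nonneg fun u => sq_nonneg _
  set c : ℝ := √(3 * GammaF x f / x ^ 3)
  have hc : 0 ≤ c := Real.sqrt_nonneg _
  have hcΓ : c ^ 2 * (x ^ 3 / 3) = GammaF x f := by
    rw [Real.sq_sqrt (by positivity)]
    field_simp
  refine ⟨parabola x c, memA_parabola x c, parabola_right x c, fun _ => parabola_nonneg hc,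
    (gammaF_parabola hx.le).trans hcΓ, ?_⟩
  calc AreaF x f ≤ √(x ^ 3 / 12 * GammaF x f) := areaF_le_sqrt_mul_gammaF hx.le hf
    _ = √((c * (x ^ 3 / 6)) ^ 2) := by rw [← hcΓ]; congr 1; ring
    _ = AreaF x (parabola x c) := by rw [Real.sqrt_sq (by positivity), areaF_parabola hx.le hc]

/-- Proposition 5.6 of the paper (symmetrization). Every bridge `f ∈ 𝓑`
admits a nonnegative bridge `f^s ∈ 𝓑₊` with the same energy and at least the same area. -/
theorem symmetrization (f : ℝ → ℝ) (hf : MemA 1 f) (hbridge : f 1 = 0) :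
    ∃ fs : ℝ → ℝ, MemA 1 fs ∧ fs 1 = 0 ∧ (∀ u ∈ Set.Icc (0:ℝ) 1, 0 ≤ fs u) ∧
      GammaF 1 fs = GammaF 1 f ∧ AreaF 1 f ≤ AreaF 1 fs :=
  symmetrization_general one_pos hf

end DidoLIL
end
end

section
/- There exists an absolutely continuous f : [0,1] → ℝ with f(0) = 0 and ∫₀¹ f′(u)² du ≤ 1 such that the area (2-dimensional Lebesgue measure) of the convex hull of { (t, 𝔤_f(t)) : 0 ≤ t ≤ 1 } ⊂ ℝ² is at least √2 × 0.090435. Consequently the constant ϑ := (1/√2) · sup over all such f of this area satisfies ϑ ≥ 0.090435. -/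
/-!
The hull of the graph of `φ` over `[a, b]` contains the region between the graph and its chord, so
its area is at least `∫ φ - (b - a) (φ a + φ b) / 2`.  For `φ = 𝔤_f` on `[0, 1]` this is a *linear*
functional of `f'`, namely `∫₀¹ f'(s) ((1 - s) / 2 + s log s) ds`.  By Cauchy–Schwarz its
maximizers of given energy have `f(s)` proportional to `s (1 - s + s log s)`, which has a simple
zero at `0` and a double zero at `1`.  The cubic `s (1 - s)²` with these zeros is nearly as good.

The supremum of the hull areas is finite because `|f| ≤ ∫ (1 + f'²) / 2 ≤ 1` on `[0, 1]` when the
energy is at most one; then `|𝔤_f| ≤ 1` too, and the hull lies in `[0, 1] × [-1, 1]`.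
-/

open MeasureTheory Filter Set
open scoped ENNReal

noncomputable section

namespace DidoLIL

/-- The running-average transform `𝔤_f(t) = (1/t)∫₀ᵗ f(s) ds` (with `𝔤_f(0) = 0`). -/
def runAvg (f : ℝ → ℝ) (t : ℝ) : ℝ := t⁻¹ * ∫ s in (0:ℝ)..t, f s

/-- A point of the plane `ℝ² = EuclideanSpace ℝ (Fin 2)`. -/
def planePt (a b : ℝ) : EuclideanSpace ℝ (Fin 2) :=
  (EuclideanSpace.equiv (Fin 2) ℝ).symm ![a, b]

/-- The area of the space-time convex hull of the running average `𝔤_f` of `f`. -/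
def comHullArea (f : ℝ → ℝ) : ℝ :=
  (MeasureTheory.volume
    (convexHull ℝ ((fun t => planePt t (runAvg f t)) '' Set.Icc (0:ℝ) 1))).toReal

lemma ofReal_integral_le_lintegral_ofReal {α : Type*} [MeasurableSpace α] {μ : Measure α}
    {f : α → ℝ} (hf : Integrable f μ) :
    ENNReal.ofReal (∫ x, f x ∂μ) ≤ ∫⁻ x, ENNReal.ofReal (f x) ∂μ := by
  rw [integral_eq_lintegral_pos_part_sub_lintegral_neg_part hf]
  exact (ENNReal.ofReal_le_ofReal (sub_le_self _ ENNReal.toReal_nonneg)).trans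
    ENNReal.ofReal_toReal_le

section ConvexRegion

variable {E : Type*} [AddCommGroup E] [Module ℝ E] {C : Set (E × ℝ)} {s : Set E} {u v : E → ℝ}

lemma regionBetween_subset_of_convex (hC : Convex ℝ C) (hu : ∀ t ∈ s, (t, u t) ∈ C)
    (hv : ∀ t ∈ s, (t, v t) ∈ C) : regionBetween u v s ⊆ C := by
  rintro ⟨t, y⟩ ⟨ht, hy⟩
  have hvert : (t, y) ∈ segment ℝ (t, u t) (t, v t) := by
    rw [← Prod.image_mk_segment_right]
    exact mem_image_of_mem _ (Icc_subset_segment (Ioo_subset_Icc_self hy))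
  exact hC.segment_subset (hu t ht) (hv t ht) hvert

lemma ofReal_setIntegral_sub_le_measure_of_convex [MeasurableSpace E] {μ : Measure E} [SFinite μ]
    (hC : Convex ℝ C) (hs : MeasurableSet s) (hu : IntegrableOn u s μ) (hv : IntegrableOn v s μ)
    (huC : ∀ t ∈ s, (t, u t) ∈ C) (hvC : ∀ t ∈ s, (t, v t) ∈ C) :
    ENNReal.ofReal (∫ t in s, (v t - u t) ∂μ) ≤ μ.prod volume C :=
  calc ENNReal.ofReal (∫ t in s, (v t - u t) ∂μ)
      ≤ ∫⁻ t in s, ENNReal.ofReal (v t - u t) ∂μ :=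
        ofReal_integral_le_lintegral_ofReal (hv.sub hu)
    _ = μ.prod volume (regionBetween u v s) :=
        (volume_regionBetween_eq_lintegral hu.aemeasurable hv.aemeasurable hs).symm
    _ ≤ μ.prod volume C := measure_mono (regionBetween_subset_of_convex hC huC hvC)

end ConvexRegion

section GraphHull

variable {φ : ℝ → ℝ} {a b : ℝ}

lemma chord_mem_convexHull_graphOn {t : ℝ} (ht : t ∈ Icc a b) :
    (t, φ a + (t - a) * slope φ a b) ∈ convexHull ℝ ((Icc a b).graphOn φ) := by
  have hab : a ≤ b := ht.1.trans ht.2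
  have hgraph : ∀ s ∈ Icc a b, (s, φ s) ∈ convexHull ℝ ((Icc a b).graphOn φ) :=
    fun s hs => subset_convexHull ℝ _ ⟨s, hs, rfl⟩
  rcases hab.eq_or_lt with rfl | hlt
  · obtain rfl : t = a := le_antisymm ht.2 ht.1
    simp
  · have hba : 0 < b - a := sub_pos.2 hlt
    have hratio : (t - a) / (b - a) ∈ Icc (0 : ℝ) 1 :=
      ⟨div_nonneg (sub_nonneg.2 ht.1) hba.le, (div_le_one hba).2 (by linarith [ht.2])⟩
    convert (convex_convexHull ℝ _).lineMap_mem (hgraph a (left_mem_Icc.2 hab))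
      (hgraph b (right_mem_Icc.2 hab)) hratio using 1
    ext
    · simp [AffineMap.lineMap_apply, hba.ne']
    · rw [AffineMap.snd_lineMap, AffineMap.lineMap_apply_ring', slope_def_field]
      ring

lemma integral_chord (φ : ℝ → ℝ) (a b : ℝ) :
    ∫ t in a..b, (φ a + (t - a) * slope φ a b) = (b - a) * (φ a + φ b) / 2 := by
  have hslope : (b - a) * slope φ a b = φ b - φ a := sub_smul_slope φ a b
  rw [intervalIntegral.integral_add (by simp) (Continuous.intervalIntegrable (by fun_prop) _ _),
    intervalIntegral.integral_mul_const, intervalIntegral.integral_comp_sub_right (fun t => t)]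
  simp only [intervalIntegral.integral_const, smul_eq_mul, integral_id, sub_self]
  linear_combination (b - a) / 2 * hslope

lemma ofReal_integral_sub_trapezoid_le_volume_hull (hab : a ≤ b)
    (hφ : IntervalIntegrable φ volume a b) :
    ENNReal.ofReal ((∫ t in a..b, φ t) - (b - a) * (φ a + φ b) / 2) ≤
      volume (convexHull ℝ ((Icc a b).graphOn φ)) := by
  have hchord : Continuous fun t => φ a + (t - a) * slope φ a b := by fun_prop
  rw [← integral_chord, ← intervalIntegral.integral_sub hφ (hchord.intervalIntegrable _ _),
    intervalIntegral.integral_of_le hab, ← integral_Icc_eq_integral_Ioc]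
  exact ofReal_setIntegral_sub_le_measure_of_convex (convex_convexHull ℝ _) measurableSet_Icc
    hchord.continuousOn.integrableOn_Icc ((intervalIntegrable_iff_integrableOn_Icc_of_le hab).1 hφ)
    (fun t ht => chord_mem_convexHull_graphOn ht) (fun t ht => subset_convexHull ℝ _ ⟨t, ht, rfl⟩)

lemma volume_hull_graphOn_le {m M : ℝ} (hφ : MapsTo φ (Icc a b) (Icc m M)) :
    volume (convexHull ℝ ((Icc a b).graphOn φ)) ≤
      ENNReal.ofReal (b - a) * ENNReal.ofReal (M - m) := by
  have hbox : convexHull ℝ ((Icc a b).graphOn φ) ⊆ Icc a b ×ˢ Icc m M := by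
    refine convexHull_min ?_ ((convex_Icc a b).prod (convex_Icc m M))
    rintro _ ⟨t, ht, rfl⟩
    exact ⟨ht, hφ ht⟩
  calc volume (convexHull ℝ ((Icc a b).graphOn φ)) ≤ volume (Icc a b ×ˢ Icc m M) :=
        measure_mono hbox
    _ = ENNReal.ofReal (b - a) * ENNReal.ofReal (M - m) := by
        rw [Measure.volume_eq_prod, Measure.prod_prod, Real.volume_Icc, Real.volume_Icc]

end GraphHull

lemma isLinearMap_planePt : IsLinearMap ℝ fun q : ℝ × ℝ => planePt q.1 q.2 where
  map_add p q := by ext i; fin_cases i <;> simp [planePt]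
  map_smul c p := by ext i; fin_cases i <;> simp [planePt]

lemma volume_image_planePt (C : Set (ℝ × ℝ)) :
    volume ((fun q : ℝ × ℝ => planePt q.1 q.2) '' C) = volume C := by
  let e : ℝ × ℝ ≃ᵐ EuclideanSpace ℝ (Fin 2) :=
    MeasurableEquiv.finTwoArrow.symm.trans (MeasurableEquiv.toLp 2 (Fin 2 → ℝ))
  have he : MeasurePreserving e :=
    (PiLp.volume_preserving_toLp (Fin 2)).comp ((volume_preserving_finTwoArrow ℝ).symm _)
  rw [← he.measure_preimage_equiv]
  exact congrArg volume (preimage_image_eq C e.injective)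

lemma comHullArea_eq_volume_hull_graphOn (f : ℝ → ℝ) :
    comHullArea f = (volume (convexHull ℝ ((Icc (0 : ℝ) 1).graphOn (runAvg f)))).toReal := by
  rw [← volume_image_planePt, isLinearMap_planePt.image_convexHull, graphOn, image_image]
  rfl

lemma abs_runAvg_le_of_abs_le {f : ℝ → ℝ} {M t : ℝ} (ht : 0 ≤ t) (hf : ∀ s ∈ Icc 0 t, |f s| ≤ M) :
    |runAvg f t| ≤ M := by
  have hM : 0 ≤ M := (abs_nonneg _).trans (hf 0 (left_mem_Icc.2 ht))
  have hint : ‖∫ s in (0 : ℝ)..t, f s‖ ≤ M * |t - 0| :=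
    intervalIntegral.norm_integral_le_of_norm_le_const fun s hs =>
      hf s (Ioc_subset_Icc_self (uIoc_of_le ht ▸ hs))
  rw [Real.norm_eq_abs, sub_zero, abs_of_nonneg ht] at hint
  rw [runAvg, abs_mul, abs_inv, abs_of_nonneg ht, ← div_eq_inv_mul]
  exact div_le_of_le_mul₀ ht hM hint

section Admissible

variable {f : ℝ → ℝ} {x : ℝ}

lemma MemA.abs_le_half_add_gammaF (hf : MemA x f) {t : ℝ} (ht : t ∈ Icc 0 x) :
    |f t| ≤ (x + GammaF x f) / 2 := by
  obtain ⟨-, hint, hprim, hsq⟩ := hf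
  have hone : IntegrableOn (fun _ : ℝ => (1 : ℝ)) (Icc 0 x) :=
    continuousOn_const.integrableOn_Icc
  have hsub : Ioc 0 t ⊆ Icc 0 x := fun s hs => ⟨hs.1.le, hs.2.trans ht.2⟩
  calc |f t| = |∫ s in Ioc 0 t, deriv f s| := by
        rw [hprim t ht, intervalIntegral.integral_of_le ht.1]
    _ ≤ ∫ s in Ioc 0 t, |deriv f s| := abs_integral_le_integral_abs
    _ ≤ ∫ s in Icc 0 x, |deriv f s| :=
        setIntegral_mono_set hint.abs (ae_of_all _ fun _ => abs_nonneg _) hsub.eventuallyLE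
    _ ≤ ∫ s in Icc 0 x, (1 + deriv f s ^ 2) / 2 := by
        refine integral_mono hint.abs ((hone.add hsq).div_const 2) fun s => ?_
        have hsquare : 0 ≤ (|deriv f s| - 1) ^ 2 := sq_nonneg _
        rw [sub_sq, sq_abs] at hsquare
        change |deriv f s| ≤ (1 + deriv f s ^ 2) / 2
        linarith
    _ = (x + GammaF x f) / 2 := by
        rw [integral_div, integral_add hone hsq]
        simp [GammaF, ht.1.trans ht.2]

lemma MemA.continuousOn (hf : MemA x f) : ContinuousOn f (Icc 0 x) := by
  obtain ⟨-, hint, hprim, -⟩ := hf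
  exact (intervalIntegral.continuousOn_primitive hint).congr fun t ht => by
    rw [hprim t ht, intervalIntegral.integral_of_le ht.1]

lemma MemA.abs_runAvg_le (hf : MemA x f) {t : ℝ} (ht : t ∈ Icc 0 x) :
    |runAvg f t| ≤ (x + GammaF x f) / 2 :=
  abs_runAvg_le_of_abs_le ht.1 fun _ hs => hf.abs_le_half_add_gammaF ⟨hs.1, hs.2.trans ht.2⟩

lemma MemA.integrableOn_runAvg (hf : MemA x f) :
    IntegrableOn (runAvg f) (Icc 0 x) := by
  have hprim : ContinuousOn (fun t => ∫ s in (0 : ℝ)..t, f s) (Icc 0 x) :=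
    (intervalIntegral.continuousOn_primitive hf.continuousOn.integrableOn_Icc).congr fun t ht =>
      intervalIntegral.integral_of_le ht.1
  have hmeas : AEStronglyMeasurable (runAvg f) (volume.restrict (Icc 0 x)) :=
    measurable_inv.aestronglyMeasurable.mul (hprim.aestronglyMeasurable measurableSet_Icc)
  exact IntegrableOn.of_bound measure_Icc_lt_top hmeas ((x + GammaF x f) / 2)
    ((ae_restrict_iff' measurableSet_Icc).2 (ae_of_all _ fun t ht => hf.abs_runAvg_le ht))

end Admissible

section HullArea

variable {f : ℝ → ℝ}

lemma MemA.volume_hull_runAvg_le (hf : MemA 1 f) :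
    volume (convexHull ℝ ((Icc (0 : ℝ) 1).graphOn (runAvg f))) ≤
      ENNReal.ofReal (1 + GammaF 1 f) := by
  have hbox := volume_hull_graphOn_le fun t (ht : t ∈ Icc (0 : ℝ) 1) =>
    abs_le.1 (hf.abs_runAvg_le ht)
  simpa using hbox

lemma MemA.comHullArea_le (hf : MemA 1 f) : comHullArea f ≤ 1 + GammaF 1 f := by
  have hΓ : 0 ≤ GammaF 1 f := integral_nonneg fun _ => sq_nonneg _
  rw [comHullArea_eq_volume_hull_graphOn]
  exact ENNReal.toReal_le_of_le_ofReal (by linarith) hf.volume_hull_runAvg_le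

lemma MemA.integral_runAvg_sub_le_comHullArea (hf : MemA 1 f) :
    (∫ t in (0 : ℝ)..1, runAvg f t) - runAvg f 1 / 2 ≤ comHullArea f := by
  have hint := (intervalIntegrable_iff_integrableOn_Icc_of_le zero_le_one).2 hf.integrableOn_runAvg
  have hfin := ne_top_of_le_ne_top ENNReal.ofReal_ne_top hf.volume_hull_runAvg_le
  have hle := ofReal_integral_sub_trapezoid_le_volume_hull zero_le_one hint
  rw [ENNReal.ofReal_le_iff_le_toReal hfin, ← comHullArea_eq_volume_hull_graphOn] at hle
  simpa [runAvg] using hle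

lemma bddAbove_comHullArea :
    BddAbove {a : ℝ | ∃ f : ℝ → ℝ, MemA 1 f ∧ GammaF 1 f ≤ 1 ∧ a = comHullArea f} := by
  refine ⟨2, ?_⟩
  rintro _ ⟨f, hf, hΓ, rfl⟩
  linarith [hf.comHullArea_le]

end HullArea

lemma memA_of_contDiff {f : ℝ → ℝ} (hf : ContDiff ℝ 1 f) (h0 : f 0 = 0) (x : ℝ) : MemA x f := by
  have hderiv : Continuous (deriv f) := hf.continuous_deriv le_rfl
  refine ⟨h0, hderiv.continuousOn.integrableOn_Icc, fun t _ => ?_,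
    (hderiv.pow 2).continuousOn.integrableOn_Icc⟩
  rw [intervalIntegral.integral_deriv_eq_sub (fun s _ => hf.differentiable_one s)
    (hderiv.intervalIntegrable _ _), h0, sub_zero]

lemma integral_sum_mul_pow {n : ℕ} (c : Fin n → ℝ) (a b : ℝ) :
    ∫ s in a..b, ∑ i, c i * s ^ (i : ℕ) =
      ∑ i, c i * ((b ^ (i + 1 : ℕ) - a ^ (i + 1 : ℕ)) / (i + 1)) := by
  rw [intervalIntegral.integral_finsetSum
    fun i _ => Continuous.intervalIntegrable (by fun_prop) _ _]
  simp only [intervalIntegral.integral_const_mul, integral_pow]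

/-- The test function `s (1 - s)²`, scaled to have energy just below one: without the factor
`27 / 10` its energy is `2 / 15`. -/
def cubicBump (s : ℝ) : ℝ := 27 / 10 * (s * (1 - s) ^ 2)

lemma memA_cubicBump : MemA 1 cubicBump :=
  memA_of_contDiff (by unfold cubicBump; fun_prop) (by simp [cubicBump]) 1

lemma deriv_cubicBump (s : ℝ) : deriv cubicBump s = 27 / 10 * ((1 - s) * (1 - 3 * s)) := by
  have h : HasDerivAt cubicBump
      (27 / 10 * (1 * (1 - s) ^ 2 + s * (2 * (1 - s) ^ 1 * -1))) s :=
    ((hasDerivAt_id s).mul (((hasDerivAt_id s).const_sub 1).pow 2)).const_mul _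
  rw [h.deriv]
  ring

lemma gammaF_cubicBump : GammaF 1 cubicBump = 243 / 250 := by
  have hsq (s : ℝ) : deriv cubicBump s ^ 2 =
      (27 / 10) ^ 2 * ∑ i, (![1, -8, 22, -24, 9] : Fin 5 → ℝ) i * s ^ (i : ℕ) := by
    simp only [deriv_cubicBump, Fin.sum_univ_five, Matrix.cons_val, Fin.coe_ofNat_eq_mod]
    ring
  rw [GammaF, integral_Icc_eq_integral_Ioc, ← intervalIntegral.integral_of_le zero_le_one]
  simp_rw [hsq]
  rw [intervalIntegral.integral_const_mul, integral_sum_mul_pow]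
  norm_num [Fin.sum_univ_succ]

lemma runAvg_cubicBump (t : ℝ) :
    runAvg cubicBump t =
      27 / 10 * ∑ i, (![0, 1 / 2, -2 / 3, 1 / 4] : Fin 4 → ℝ) i * t ^ (i : ℕ) := by
  have hpoly (s : ℝ) : cubicBump s =
      27 / 10 * ∑ i, (![0, 1, -2, 1] : Fin 4 → ℝ) i * s ^ (i : ℕ) := by
    simp only [cubicBump, Fin.sum_univ_four, Matrix.cons_val, Fin.coe_ofNat_eq_mod]
    ring
  simp_rw [runAvg, hpoly]
  rw [intervalIntegral.integral_const_mul, integral_sum_mul_pow]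
  rcases eq_or_ne t 0 with rfl | ht
  · simp [Fin.sum_univ_succ]
  · simp only [Fin.sum_univ_four, Matrix.cons_val, Fin.coe_ofNat_eq_mod]
    push_cast
    field_simp
    ring

lemma integral_runAvg_cubicBump : ∫ t in (0 : ℝ)..1, runAvg cubicBump t = 39 / 160 := by
  simp_rw [runAvg_cubicBump]
  rw [intervalIntegral.integral_const_mul, integral_sum_mul_pow]
  norm_num [Fin.sum_univ_succ]

lemma le_comHullArea_cubicBump : 21 / 160 ≤ comHullArea cubicBump := by
  have hone : runAvg cubicBump 1 = 9 / 40 := by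
    rw [runAvg_cubicBump]
    norm_num [Fin.sum_univ_succ]
  have hle := memA_cubicBump.integral_runAvg_sub_le_comHullArea
  rw [integral_runAvg_cubicBump, hone] at hle
  linarith

/-- Proposition A.1 of the paper. There is an admissible `f` whose
running-average space-time hull has area at least `√2 × 0.090435`; consequently the
constant `ϑ = (1/√2)·sup_f A(H(𝔤_f))` satisfies `ϑ ≥ 0.090435`. -/
theorem com_area_constant_lower_bound :
    (∃ f : ℝ → ℝ, MemA 1 f ∧ GammaF 1 f ≤ 1 ∧
      Real.sqrt 2 * 0.090435 ≤ comHullArea f) ∧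
    (0.090435 : ℝ) ≤ (1 / Real.sqrt 2) *
      sSup {a : ℝ | ∃ f : ℝ → ℝ, MemA 1 f ∧ GammaF 1 f ≤ 1 ∧ a = comHullArea f} := by
  have hΓ : GammaF 1 cubicBump ≤ 1 := by rw [gammaF_cubicBump]; norm_num
  have harea : Real.sqrt 2 * 0.090435 ≤ comHullArea cubicBump := by
    have hsqrt : Real.sqrt 2 ≤ 1.45 := Real.sqrt_le_iff.2 (by norm_num)
    linarith [le_comHullArea_cubicBump]
  refine ⟨⟨cubicBump, memA_cubicBump, hΓ, harea⟩, ?_⟩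
  have hsup := harea.trans (le_csSup bddAbove_comHullArea ⟨cubicBump, memA_cubicBump, hΓ, rfl⟩)
  rwa [one_div_mul_eq_div, le_div_iff₀' (by positivity)]

end DidoLIL
end
end
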